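/- The algebra 𝔑₆ degenerates to 𝔑₉(−1): the structure λ with table e₁e₂ = e₄, e₂e₁ = −e₄, e₂e₂ = e₃ lies in the closure of the GL(V)-orbit of the structure μ with table e₁e₂ = e₃, e₂e₁ = e₄. -/

import Mathlib

noncomputable section

/-- `V = ℂ⁴`. -/
abbrev V : Type := Fin 4 → ℂ

/-- The standard basis vectors `e₁, e₂, e₃, e₄` of `V` (indexed by `0, 1, 2, 3`). -/
def e (i : Fin 4) : V := Pi.single i 1

/-- The `GL(V)`-orbit `O(μ)` of an algebra structure `μ` on `V`, for the action
`(g • μ)(x, y) = g (μ (g⁻¹ x) (g⁻¹ y))`. -/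
def orbit (μ : V →L[ℂ] V →L[ℂ] V) : Set (V →L[ℂ] V →L[ℂ] V) :=
  {ν | ∃ g : V ≃L[ℂ] V, ∀ x y : V, ν x y = g (μ (g.symm x) (g.symm y))}

/-!
For `t ≠ 0` the vectors `E₁ = t e₁`, `E₂ = e₁ + e₂`, `E₃ = e₃ + e₄`, `E₄ = t e₃` form a basis in
which the multiplication of `𝔑₆` reads `E₁E₂ = E₄`, `E₂E₁ = t E₃ - E₄`, `E₂E₂ = E₃`. These structure
constants are polynomial in `t`, and at `t = 0` they are those of `𝔑₉(-1)`.
-/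

open Filter Topology Module

section BilinearOfTable

variable {𝕜 E₁ E₂ F ι κ : Type*} [NontriviallyNormedField 𝕜]
  [NormedAddCommGroup E₁] [NormedSpace 𝕜 E₁] [NormedAddCommGroup E₂] [NormedSpace 𝕜 E₂]
  [NormedAddCommGroup F] [NormedSpace 𝕜 F]
  (b₁ : Basis ι 𝕜 E₁) (b₂ : Basis κ 𝕜 E₂)

theorem bilinear_ext_basis {f g : E₁ →L[𝕜] E₂ →L[𝕜] F}
    (h : ∀ i j, f (b₁ i) (b₂ j) = g (b₁ i) (b₂ j)) : f = g :=
  ContinuousLinearMap.coe_injective <| b₁.ext fun i =>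
    ContinuousLinearMap.coe_injective <| b₂.ext fun j => h i j

variable [CompleteSpace 𝕜] [Finite ι] [Finite κ]

/-- The continuous bilinear map with multiplication table `c`: it sends the pair of basis vectors
`(b₁ i, b₂ j)` to `c i j`. -/
def bilinearOfTable (c : ι → κ → F) : E₁ →L[𝕜] E₂ →L[𝕜] F :=
  have := b₁.finiteDimensional_of_finite
  have := b₂.finiteDimensional_of_finite
  b₁.constrL fun i => b₂.constrL (c i)

theorem bilinearOfTable_apply_basis (c : ι → κ → F) (i : ι) (j : κ) :
    bilinearOfTable b₁ b₂ c (b₁ i) (b₂ j) = c i j := by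
  simp [bilinearOfTable]

theorem bilinearOfTable_eq_self (f : E₁ →L[𝕜] E₂ →L[𝕜] F) :
    bilinearOfTable b₁ b₂ (fun i j => f (b₁ i) (b₂ j)) = f :=
  bilinear_ext_basis b₁ b₂ fun i j => bilinearOfTable_apply_basis b₁ b₂ _ i j

theorem continuous_bilinearOfTable :
    Continuous (bilinearOfTable b₁ b₂ : (ι → κ → F) → E₁ →L[𝕜] E₂ →L[𝕜] F) := by
  have := Fintype.ofFinite ι
  have := Fintype.ofFinite κ
  have := b₁.finiteDimensional_of_finite
  have := b₂.finiteDimensional_of_finite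
  refine continuous_clm_apply.2 fun x => continuous_clm_apply.2 fun y => ?_
  simp only [bilinearOfTable, Basis.constrL_apply, _root_.sum_apply, _root_.smul_apply]
  fun_prop

end BilinearOfTable

theorem e_apply (i k : Fin 4) : e i k = if k = i then 1 else 0 :=
  Pi.single_apply i 1 k

theorem basisFun_eq_e (i : Fin 4) : Pi.basisFun ℂ (Fin 4) i = e i :=
  Pi.basisFun_apply ℂ (Fin 4) i

section Degeneration

variable {μ ν : V →L[ℂ] V →L[ℂ] V}

theorem mem_orbit_of_basis (b : Basis (Fin 4) ℂ V)
    (h : ∀ i j, μ (b i) (b j) = ∑ k, ν (e i) (e j) k • b k) : ν ∈ orbit μ := by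
  let g : V ≃L[ℂ] V := b.equivFunL
  have g_symm_apply (x : V) : g.symm x = ∑ k, x k • b k := b.equivFun_symm_apply x
  have g_symm_e (i : Fin 4) : g.symm (e i) = b i := by simp [g_symm_apply, e_apply]
  have hν : ν = g.arrowCongr (g.arrowCongr g) μ := by
    refine bilinear_ext_basis (Pi.basisFun ℂ (Fin 4)) (Pi.basisFun ℂ (Fin 4)) fun i j => ?_
    simp only [basisFun_eq_e]
    calc ν (e i) (e j) = g (g.symm (ν (e i) (e j))) := (g.apply_symm_apply _).symm
      _ = g (μ (g.symm (e i)) (g.symm (e j))) := by rw [g_symm_apply, ← h, g_symm_e, g_symm_e]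
  exact ⟨g, fun x y => by rw [hν]; rfl⟩

theorem mem_closure_orbit_of_tendsto_structureConstants {τ : Type*} {l : Filter τ} [l.NeBot]
    {b : τ → Fin 4 → V} {c : τ → Fin 4 → Fin 4 → V}
    (hb : ∀ᶠ t in l, LinearIndependent ℂ (b t))
    (hc : ∀ᶠ t in l, ∀ i j, μ (b t i) (b t j) = ∑ k, c t i j k • b t k)
    (hlim : Tendsto c l (𝓝 fun i j => ν (e i) (e j))) : ν ∈ closure (orbit μ) := by
  let std := Pi.basisFun ℂ (Fin 4)
  have tendsto_ν : Tendsto (fun t => bilinearOfTable std std (c t)) l (𝓝 ν) := by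
    rw [← bilinearOfTable_eq_self std std ν]
    simp only [std, basisFun_eq_e]
    exact (continuous_bilinearOfTable _ _).continuousAt.tendsto.comp hlim
  refine mem_closure_of_tendsto tendsto_ν ?_
  filter_upwards [hb, hc] with t hbt hct
  refine mem_orbit_of_basis (basisOfLinearIndependentOfCardEqFinrank hbt (by simp)) fun i j => ?_
  simp only [coe_basisOfLinearIndependentOfCardEqFinrank, hct, ← basisFun_eq_e]
  rw [bilinearOfTable_apply_basis]

end Degeneration

/-- The basis `E₁, E₂, E₃, E₄` of `V` along which `𝔑₆` degenerates to `𝔑₉(-1)` as `t → 0`; it is a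
basis only for `t ≠ 0`. -/
def degeneratingBasis (t : ℂ) : Fin 4 → V := ![t • e 0, e 0 + e 1, e 2 + e 3, t • e 2]

/-- The products `EᵢEⱼ` of `𝔑₆` in coordinates with respect to `degeneratingBasis t`. -/
def degeneratingTable (t : ℂ) : Fin 4 → Fin 4 → V :=
  ![![0, e 3, 0, 0], ![t • e 2 - e 3, e 2, 0, 0], ![0, 0, 0, 0], ![0, 0, 0, 0]]

theorem linearIndependent_degeneratingBasis {t : ℂ} (ht : t ≠ 0) :
    LinearIndependent ℂ (degeneratingBasis t) := by
  rw [Fintype.linearIndependent_iff]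
  intro a ha
  have coord (k : Fin 4) := congrFun ha k
  have coord₀ : a 0 * t + a 1 = 0 := by
    simpa [Fin.sum_univ_four, degeneratingBasis, e_apply] using coord 0
  have coord₁ : a 1 = 0 := by
    simpa [Fin.sum_univ_four, degeneratingBasis, e_apply] using coord 1
  have coord₂ : a 2 + a 3 * t = 0 := by
    simpa [Fin.sum_univ_four, degeneratingBasis, e_apply] using coord 2
  have coord₃ : a 2 = 0 := by
    simpa [Fin.sum_univ_four, degeneratingBasis, e_apply] using coord 3
  simpa [Fin.forall_fin_succ, coord₁, coord₃, ht] using And.intro coord₀ coord₂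

theorem continuous_degeneratingTable : Continuous degeneratingTable := by
  unfold degeneratingTable
  fun_prop

theorem mul_degeneratingBasis {μ : V →L[ℂ] V →L[ℂ] V}
    (hμ : ∀ i j : Fin 4, μ (e i) (e j) =
      (![![0, e 2, 0, 0], ![e 3, 0, 0, 0], ![0, 0, 0, 0], ![0, 0, 0, 0]] :
        Fin 4 → Fin 4 → V) i j) (t : ℂ) (i j : Fin 4) :
    μ (degeneratingBasis t i) (degeneratingBasis t j) =
      ∑ k, degeneratingTable t i j k • degeneratingBasis t k := by
  fin_cases i <;> fin_cases j <;>
    simp [degeneratingBasis, degeneratingTable, hμ, Fin.sum_univ_four, e_apply]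

/-- 𝔑₆ degenerates to 𝔑₉(−1). -/
theorem stmt13 (μ lam : V →L[ℂ] V →L[ℂ] V)
    (hμ : ∀ i j : Fin 4, μ (e i) (e j) =
    (![
      ![0, e 2, 0, 0],
      ![e 3, 0, 0, 0],
      ![0, 0, 0, 0],
      ![0, 0, 0, 0]
     ] : Fin 4 → Fin 4 → V) i j)
    (hlam : ∀ i j : Fin 4, lam (e i) (e j) =
    (![
      ![0, e 3, 0, 0],
      ![-e 3, e 2, 0, 0],
      ![0, 0, 0, 0],
      ![0, 0, 0, 0]
     ] : Fin 4 → Fin 4 → V) i j) :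
    lam ∈ closure (orbit μ) := by
  have table_zero : degeneratingTable 0 = fun i j => lam (e i) (e j) := by
    ext i j : 2
    rw [hlam]
    simp [degeneratingTable]
  have linearIndependent : ∀ᶠ t in 𝓝[≠] (0 : ℂ), LinearIndependent ℂ (degeneratingBasis t) :=
    eventually_mem_nhdsWithin.mono fun _ => linearIndependent_degeneratingBasis
  have tendsto_table : Tendsto degeneratingTable (𝓝[≠] 0) (𝓝 fun i j => lam (e i) (e j)) :=
    table_zero ▸ continuous_degeneratingTable.continuousWithinAt
  exact mem_closure_orbit_of_tendsto_structureConstants linearIndependent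
    (.of_forall (mul_degeneratingBasis hμ)) tendsto_table
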